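/- arXiv:0902.3311 — 5 statements merged into one kernel-verified Lean document; each statement's English description precedes it below -/
import Mathlib

section
/- Let n ≥ 1 and V = ℝⁿ. A Borel set S ⊆ ℝⁿ is Haar-null if and only if S has Lebesgue measure zero. -/
/-!
If `μ` is a probability measure with `μ (x + A) = 0` for all `x`, then the set
`{(x, y) | y - x ∈ A}` is null for `volume.prod μ`, since its sections at `x` are the translates
`x + A`. By Fubini its section at `μ`-almost every `y` is Lebesgue-null; as `μ ≠ 0` such a `y`
exists, and that section is `y - A`, whose Lebesgue measure equals that of `A`. Conversely, if `S`
is Lebesgue-null, so are all its translates, and Lebesgue measure on the unit cube is a witness.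
-/

open MeasureTheory

/-- A subset `S` of a topological real vector space is Haar-null (shy) if it is contained in a
Borel set `A` for which there is a compactly supported Borel probability measure `μ` with
`μ (x + A) = 0` for every `x`. -/
def IsHaarNull {V : Type*} [AddCommGroup V] [TopologicalSpace V] [MeasurableSpace V]
    (S : Set V) : Prop :=
  ∃ A : Set V, S ⊆ A ∧ MeasurableSet A ∧
    ∃ μ : Measure V, IsProbabilityMeasure μ ∧
      (∃ K : Set V, IsCompact K ∧ μ Kᶜ = 0) ∧
      ∀ x : V, μ ((fun a => x + a) '' A) = 0

/-- In `ℝⁿ` (`n ≥ 1`), a Borel set is Haar-null if and only if it has Lebesgue measure zero. -/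
theorem isHaarNull_iff_volume_eq_zero (n : ℕ) (hn : 1 ≤ n)
    (S : Set (Fin n → ℝ)) (hS : MeasurableSet S) :
    IsHaarNull S ↔ volume S = 0 := by
  constructor
  · rintro ⟨A, hSA, hA, μ, hμ, -, h⟩
    refine measure_mono_null hSA ?_
    have hT : MeasurableSet {p : (Fin n → ℝ) × (Fin n → ℝ) | p.2 - p.1 ∈ A} :=
      (measurable_snd.sub measurable_fst) hA
    have hnull : (volume.prod μ) {p : (Fin n → ℝ) × (Fin n → ℝ) | p.2 - p.1 ∈ A} = 0 := by
      rw [Measure.measure_prod_null hT]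
      refine Filter.Eventually.of_forall fun x => ?_
      refine measure_mono_null ?_ (h x)
      intro y hy
      exact ⟨y - x, hy, add_sub_cancel x y⟩
    rw [Measure.prod_apply_symm hT, lintegral_eq_zero_iff (measurable_measure_prodMk_right hT)]
      at hnull
    obtain ⟨y, hy⟩ := hnull.exists
    have hmp := (Measure.measurePreserving_sub_left (volume : Measure (Fin n → ℝ)) y).measure_preimage
      hA.nullMeasurableSet
    rw [← hmp]
    exact hy
  · intro h
    refine ⟨S, subset_rfl, hS, volume.restrict (Set.Icc 0 1), ⟨?_⟩,
      ⟨Set.Icc 0 1, isCompact_Icc, ?_⟩, fun x => ?_⟩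
    · simp [Real.volume_Icc_pi]
    · rw [Measure.restrict_apply measurableSet_Icc.compl]
      simp
    · refine Measure.absolutelyContinuous_of_le Measure.restrict_le_self ?_
      rw [Set.image_add_left, measure_preimage_add, h]
end

section
/- Let V be an infinite-dimensional real Banach space. Every compact subset of V is Haar-null. -/
/-!
The compact set `K` itself serves as the Borel hull. The set `⋃ₙ [-n, n] • (K - K)` is σ-compact,
and compact sets in an infinite-dimensional Banach space have empty interior, so by Baire it is not
all of `V` (`exists_forall_ne_smul_sub`). A vector `v` outside it spans a line that meets every
translate of `K` in at most one point: two distinct points would exhibit `v` as a multiple of a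
difference of elements of `K`. Hence the image of Lebesgue measure on `[0, 1]` under `t ↦ t • v`
is a compactly supported probability measure vanishing on every translate of `K`.
-/

open MeasureTheory

/-- Some direction `v` is not a real multiple of any difference of elements of `K`. -/
theorem exists_forall_ne_smul_sub {V : Type*} [NormedAddCommGroup V] [NormedSpace ℝ V]
    [CompleteSpace V] (hV : ¬ FiniteDimensional ℝ V) {K : Set V} (hK : IsCompact K) :
    ∃ v : V, ∀ s : ℝ, ∀ a ∈ K, ∀ b ∈ K, v ≠ s • (a - b) := by
  by_contra! h
  let C : ℕ → Set V := fun n =>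
    (fun p : ℝ × V × V => p.1 • (p.2.1 - p.2.2)) '' (Set.Icc (-(n : ℝ)) n ×ˢ K ×ˢ K)
  have hC : ∀ n, IsCompact (C n) := fun n =>
    (isCompact_Icc.prod (hK.prod hK)).image (by fun_prop)
  have hU : ⋃ n, C n = Set.univ := by
    refine Set.eq_univ_of_forall fun v => ?_
    obtain ⟨s, a, ha, b, hb, rfl⟩ := h v
    obtain ⟨n, hn⟩ := exists_nat_ge |s|
    exact Set.mem_iUnion.2 ⟨n, (s, a, b), ⟨abs_le.1 hn, ha, hb⟩, rfl⟩
  obtain ⟨n, x, hx⟩ := nonempty_interior_of_iUnion_of_closed (fun n => (hC n).isClosed) hU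
  obtain ⟨r, hr, hball⟩ := Metric.nhds_basis_closedBall.mem_iff.1 (mem_interior_iff_mem_nhds.1 hx)
  exact hV (FiniteDimensional.of_isCompact_closedBall ℝ hr
    ((hC n).of_isClosed_subset Metric.isClosed_closedBall hball))

/-- In an infinite-dimensional real Banach space, every compact set is Haar-null. -/
theorem isHaarNull_of_isCompact {V : Type*} [NormedAddCommGroup V] [NormedSpace ℝ V]
    [CompleteSpace V] [MeasurableSpace V] [BorelSpace V]
    (hV : ¬ FiniteDimensional ℝ V) (K : Set V) (hK : IsCompact K) :
    IsHaarNull K := by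
  obtain ⟨v, hv⟩ := exists_forall_ne_smul_sub hV hK
  have hf : Continuous (fun t : ℝ => t • v) := by fun_prop
  have hI : IsProbabilityMeasure (volume.restrict (Set.Icc (0 : ℝ) 1)) := ⟨by simp⟩
  have hc : IsCompact ((fun t : ℝ => t • v) '' Set.Icc 0 1) := isCompact_Icc.image hf
  refine ⟨K, subset_rfl, hK.measurableSet,
    (volume.restrict (Set.Icc (0 : ℝ) 1)).map (fun t => t • v),
    Measure.isProbabilityMeasure_map hf.aemeasurable, ⟨_, hc, ?_⟩, fun x => ?_⟩
  · rw [Measure.map_apply hf.measurable hc.measurableSet.compl]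
    refine measure_mono_null (t := (Set.Icc (0 : ℝ) 1)ᶜ)
      (fun t ht hmem => ht ⟨t, hmem, rfl⟩) ?_
    rw [Measure.restrict_apply measurableSet_Icc.compl, Set.compl_inter_self, measure_empty]
  · have hKx : IsCompact ((fun a => x + a) '' K) := hK.image (by fun_prop)
    rw [Measure.map_apply hf.measurable hKx.measurableSet]
    refine Set.Subsingleton.measure_zero ?_ _
    rintro s ⟨a, ha, hsa⟩ t ⟨b, hb, htb⟩
    by_contra hst
    refine hv (s - t)⁻¹ a ha b hb ?_
    have hab : a - b = (s - t) • v := by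
      rw [sub_smul, ← add_sub_add_left_eq_sub a b x]
      exact congrArg₂ (· - ·) hsa htb
    rw [hab, inv_smul_smul₀ (sub_ne_zero.2 hst)]
end

section
/- Let d ≥ 1, 0 < p₀ < ∞ and s₀ with s₀ − d/p₀ > 0. For every sequence c define the scaling function s_c(p) = sup{ s ∈ ℝ : c ∈ b^{s,∞}_p } for 0 < p < ∞. Then the set of c ∈ b^{s₀,∞}_{p₀} for which the identity « s_c(p) = s₀ for all 0 < p ≤ p₀ and s_c(p) = d/p + s₀ − d/p₀ for all p ≥ p₀ » fails is a Haar-null subset of b^{s₀,∞}_{p₀}. -/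
/-!
The exceptional set lies in a countable union of linear subspaces `b^{s,∞}_p`. Indeed the lower
bounds on the scaling function hold for every `c ∈ b^{s₀,∞}_{p₀}`, by the embeddings
`b^{s,∞}_q ⊆ b^{s,∞}_p` (Hölder) and `b^{s,∞}_p ⊆ b^{s-d/p+d/q,∞}_q` (inclusion of `ℓ^p` in `ℓ^q`)
for `p ≤ q`. The same embeddings show that a `c` violating an upper bound belongs to some
`b^{s,∞}_p` with either `p = 1/(n+1)` and `s = s₀ + 1/(m+1)`, or `p = n+1` and
`s = d/p + s₀ - d/p₀ + 1/(m+1)`.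

All these subspaces miss one single element `g` of `b^{s₀,∞}_{p₀}` (`saturating`): at even levels all
its coefficients are equal, at odd levels only one is nonzero. The transverse measure is the image
of Lebesgue measure on `[0,1]` under `t ↦ t • g`: a translate of a linear subspace that does not
contain `g` meets the line `ℝ g` in at most one point, hence is null.
-/

open MeasureTheory
open scoped ENNReal BigOperators

/-- The space of wavelet-type coefficient sequences `c = (c_{j,k})`, `j ∈ ℕ`,
`k ∈ {0,…,2^j−1}^d`. -/
abbrev BSeq (d : ℕ) := (j : ℕ) → (Fin d → Fin (2 ^ j)) → ℝ

/-- The `j`-th term `2^{(s−d/r+d/2)j} (Σ_k |c_{j,k}|^r)^{1/r}` of the Besov quasi-norm. -/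
noncomputable def besovNormAt (d : ℕ) (s r : ℝ) (c : BSeq d) (j : ℕ) : ℝ :=
  (2 : ℝ) ^ ((s - (d : ℝ) / r + (d : ℝ) / 2) * (j : ℝ)) *
    (∑ k : Fin d → Fin (2 ^ j), |c j k| ^ r) ^ (1 / r)

/-- Membership in the Besov sequence space `b^{s,∞}_r`:
`sup_j 2^{(s−d/r+d/2)j} (Σ_k |c_{j,k}|^r)^{1/r} < ∞`. -/
def MemBesov (d : ℕ) (s r : ℝ) (c : BSeq d) : Prop :=
  ∃ C : ℝ, ∀ j : ℕ, besovNormAt d s r c j ≤ C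

/-- The weak Besov quasi-norm
`‖c‖_{W(w,p)} = sup_{λ>0} λ^w Σ_{j≥0} 2^{j(dp/2−d)} #{k : |c_{j,k}| > λ}`, valued in `[0,∞]`. -/
noncomputable def wBesovNorm (d : ℕ) (w p : ℝ) (c : BSeq d) : ℝ≥0∞ :=
  ⨆ lam : Set.Ioi (0 : ℝ),
    ENNReal.ofReal ((lam : ℝ) ^ w) *
      ∑' j : ℕ, ENNReal.ofReal ((2 : ℝ) ^ (((d : ℝ) * p / 2 - (d : ℝ)) * (j : ℝ))) *
        (Nat.card {k : Fin d → Fin (2 ^ j) // (lam : ℝ) < |c j k|} : ℝ≥0∞)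

/-- Membership in the weak Besov sequence space `W(w,p)`. -/
def MemWBesov (d : ℕ) (w p : ℝ) (c : BSeq d) : Prop :=
  wBesovNorm d w p c ≠ ⊤

/-- The Besov sequence space `b^{s,∞}_r` as a type. -/
def BesovSp (d : ℕ) (s r : ℝ) := {c : BSeq d // MemBesov d s r c}

/-- The extended distance on sequences associated with the Besov quasi-norm. -/
noncomputable def besovEDist (d : ℕ) (s r : ℝ) (c c' : BSeq d) : ℝ≥0∞ :=
  ⨆ j : ℕ, ENNReal.ofReal (besovNormAt d s r (c - c') j)

/-- A set `S ⊆ b^{s,∞}_r` is Haar-null (relative to a topology `τ` on `b^{s,∞}_r`) if it is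
contained in a Borel set `A` carrying a compactly supported Borel probability measure `μ`
all of whose translates of `A` are null. -/
def IsHaarNullBesov (d : ℕ) (s r : ℝ) (τ : TopologicalSpace (BesovSp d s r))
    (S : Set (BesovSp d s r)) : Prop :=
  ∃ A : Set (BesovSp d s r), S ⊆ A ∧ MeasurableSet[@borel _ τ] A ∧
    ∃ μ : @Measure (BesovSp d s r) (@borel _ τ),
      @IsProbabilityMeasure _ (@borel _ τ) μ ∧
      (∃ K : Set (BesovSp d s r), @IsCompact _ τ K ∧ μ Kᶜ = 0) ∧
      ∀ x : BesovSp d s r, μ {y : BesovSp d s r | ∃ a ∈ A, y.1 = x.1 + a.1} = 0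

/-- `τ` is the quasi-norm topology of `b^{s,∞}_r`: around every point, the balls of
`besovEDist` form a basis of neighbourhoods. -/
def IsBesovTopology (d : ℕ) (s r : ℝ) (τ : TopologicalSpace (BesovSp d s r)) : Prop :=
  ∀ x : BesovSp d s r, (@nhds _ τ x).HasBasis (fun ε : ℝ≥0∞ => 0 < ε)
    (fun ε => {y : BesovSp d s r | besovEDist d s r x.1 y.1 < ε})

/-- The minimax exponent `α̃`. -/
noncomputable def alphaTilde (d : ℕ) (s r p : ℝ) : ℝ :=
  if p * (d : ℝ) / (2 * s + (d : ℝ)) < r then 2 * s / (2 * s + (d : ℝ))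
  else 2 * (s - (d : ℝ) / r + (d : ℝ) / p) / (2 * (s - (d : ℝ) / r) + (d : ℝ))

/-- The irreducibility index `J(j,k)`: the smallest `J` such that `k = 2^{j−J} K` for some
`K ∈ {0,…,2^J−1}^d`, i.e. the smallest `J` with `2^{j−J} ∣ k_i` for all `i`. -/
def irredIndex (d : ℕ) (j : ℕ) (k : Fin d → Fin (2 ^ j)) : ℕ :=
  Nat.find (p := fun J : ℕ => ∀ i : Fin d, 2 ^ (j - J) ∣ (k i : ℕ)) ⟨j, fun i => by simp⟩

/-- The saturating sequence `g`, with `g_{j,k} = j^{−(1+3/r)} 2^{−(s−d/r+d/2)j} 2^{−(d/r)J(j,k)}`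
for `j ≥ 1` and `g_{0,k} = 0`. -/
noncomputable def gSeq (d : ℕ) (s r : ℝ) : BSeq d := fun j k =>
  if j = 0 then 0
  else (j : ℝ) ^ (-(1 + 3 / r)) * (2 : ℝ) ^ (-(s - (d : ℝ) / r + (d : ℝ) / 2) * (j : ℝ)) *
    (2 : ℝ) ^ (-((d : ℝ) / r) * (irredIndex d j k : ℝ))

/-! ### Besov norms at a fixed level -/

lemma besovNormAt_nonneg (d : ℕ) (s r : ℝ) (c : BSeq d) (j : ℕ) : 0 ≤ besovNormAt d s r c j := by
  unfold besovNormAt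
  have : 0 ≤ ∑ k : Fin d → Fin (2 ^ j), |c j k| ^ r :=
    Finset.sum_nonneg fun k _ => Real.rpow_nonneg (abs_nonneg _) _
  positivity

lemma besovNormAt_smul (d : ℕ) (s r : ℝ) (hr : 0 < r) (t : ℝ) (c : BSeq d) (j : ℕ) :
    besovNormAt d s r (t • c) j = |t| * besovNormAt d s r c j := by
  unfold besovNormAt
  have h : ∀ k : Fin d → Fin (2 ^ j), |(t • c) j k| ^ r = |t| ^ r * |c j k| ^ r := by
    intro k
    rw [Pi.smul_apply, Pi.smul_apply, smul_eq_mul, abs_mul,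
      Real.mul_rpow (abs_nonneg _) (abs_nonneg _)]
  have h0 : 0 ≤ ∑ k : Fin d → Fin (2 ^ j), |c j k| ^ r :=
    Finset.sum_nonneg fun k _ => Real.rpow_nonneg (abs_nonneg _) _
  rw [Finset.sum_congr rfl fun k _ => h k, ← Finset.mul_sum,
    Real.mul_rpow (Real.rpow_nonneg (abs_nonneg _) _) h0, ← Real.rpow_mul (abs_nonneg _),
    mul_one_div_cancel hr.ne', Real.rpow_one]
  ring

lemma abs_le_besovNormAt (d : ℕ) (s r : ℝ) (hr : 0 < r) (c : BSeq d) (j : ℕ)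
    (k : Fin d → Fin (2 ^ j)) :
    (2 : ℝ) ^ ((s - (d : ℝ) / r + (d : ℝ) / 2) * (j : ℝ)) * |c j k| ≤ besovNormAt d s r c j := by
  unfold besovNormAt
  gcongr
  calc |c j k| = (|c j k| ^ r) ^ (1 / r) := by
        rw [← Real.rpow_mul (abs_nonneg _), mul_one_div_cancel hr.ne', Real.rpow_one]
    _ ≤ _ := by
        refine Real.rpow_le_rpow (Real.rpow_nonneg (abs_nonneg _) _) ?_ (by positivity)
        exact Finset.single_le_sum (f := fun k => |c j k| ^ r)
          (fun k _ => Real.rpow_nonneg (abs_nonneg _) _) (Finset.mem_univ k)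

/-- Quasi-triangle inequality; the constant `2 * 2 ^ (1 / r)` is valid for every `r > 0`. -/
lemma besovNormAt_sub_le (d : ℕ) (s r : ℝ) (hr : 0 < r) (a b : BSeq d) (j : ℕ) :
    besovNormAt d s r (a - b) j ≤
      2 * 2 ^ (1 / r) * (besovNormAt d s r a j + besovNormAt d s r b j) := by
  have hA : 0 ≤ ∑ k : Fin d → Fin (2 ^ j), |a j k| ^ r :=
    Finset.sum_nonneg fun k _ => Real.rpow_nonneg (abs_nonneg _) _
  have hB : 0 ≤ ∑ k : Fin d → Fin (2 ^ j), |b j k| ^ r :=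
    Finset.sum_nonneg fun k _ => Real.rpow_nonneg (abs_nonneg _) _
  unfold besovNormAt
  set A := ∑ k : Fin d → Fin (2 ^ j), |a j k| ^ r
  set B := ∑ k : Fin d → Fin (2 ^ j), |b j k| ^ r
  have h1 : ∑ k : Fin d → Fin (2 ^ j), |(a - b) j k| ^ r ≤ 2 ^ r * (2 * max A B) := by
    calc ∑ k : Fin d → Fin (2 ^ j), |(a - b) j k| ^ r
        ≤ ∑ k : Fin d → Fin (2 ^ j), 2 ^ r * (|a j k| ^ r + |b j k| ^ r) := by
          refine Finset.sum_le_sum fun k _ => ?_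
          have hm : |(a - b) j k| ≤ 2 * max |a j k| |b j k| := by
            have := abs_sub (a j k) (b j k)
            have h1 := le_max_left |a j k| |b j k|
            have h2 := le_max_right |a j k| |b j k|
            simp only [Pi.sub_apply]
            linarith
          calc |(a - b) j k| ^ r ≤ (2 * max |a j k| |b j k|) ^ r :=
                Real.rpow_le_rpow (abs_nonneg _) hm hr.le
            _ = 2 ^ r * (max |a j k| |b j k|) ^ r :=
                Real.mul_rpow (by norm_num) (le_max_of_le_left (abs_nonneg _))
            _ ≤ _ := by
                gcongr
                have ha := Real.rpow_nonneg (abs_nonneg (a j k)) r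
                have hb := Real.rpow_nonneg (abs_nonneg (b j k)) r
                rcases max_choice |a j k| |b j k| with h | h <;> rw [h] <;> linarith
      _ = 2 ^ r * (A + B) := by rw [← Finset.mul_sum, Finset.sum_add_distrib]
      _ ≤ _ := by
          gcongr
          linarith [le_max_left A B, le_max_right A B]
  have hM : 0 ≤ max A B := le_max_of_le_left hA
  have h2 : (∑ k : Fin d → Fin (2 ^ j), |(a - b) j k| ^ r) ^ (1 / r) ≤
      2 * 2 ^ (1 / r) * (A ^ (1 / r) + B ^ (1 / r)) := by
    calc _ ≤ (2 ^ r * (2 * max A B)) ^ (1 / r) :=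
          Real.rpow_le_rpow (Finset.sum_nonneg fun k _ => Real.rpow_nonneg (abs_nonneg _) _) h1
            (by positivity)
      _ = 2 * 2 ^ (1 / r) * (max A B) ^ (1 / r) := by
          rw [Real.mul_rpow (by positivity) (by positivity), ← Real.rpow_mul (by norm_num),
            mul_one_div_cancel hr.ne', Real.rpow_one, Real.mul_rpow (by norm_num) hM, mul_assoc]
      _ ≤ _ := by
          gcongr
          have ha := Real.rpow_nonneg hA (1 / r)
          have hb := Real.rpow_nonneg hB (1 / r)
          rcases max_choice A B with h | h <;> rw [h] <;> linarith
  calc _ ≤ (2 : ℝ) ^ ((s - (d : ℝ) / r + (d : ℝ) / 2) * (j : ℝ)) *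
        (2 * 2 ^ (1 / r) * (A ^ (1 / r) + B ^ (1 / r))) := by gcongr
    _ = _ := by ring

/-! ### Linear structure and embeddings of Besov sequence spaces -/

lemma MemBesov.smul {d : ℕ} {s r : ℝ} (hr : 0 < r) {c : BSeq d} (hc : MemBesov d s r c) (t : ℝ) :
    MemBesov d s r (t • c) := by
  obtain ⟨C, hC⟩ := hc
  refine ⟨|t| * C, fun j => ?_⟩
  rw [besovNormAt_smul d s r hr]
  gcongr
  exact hC j

lemma MemBesov.sub {d : ℕ} {s r : ℝ} (hr : 0 < r) {a b : BSeq d} (ha : MemBesov d s r a)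
    (hb : MemBesov d s r b) : MemBesov d s r (a - b) := by
  obtain ⟨C, hC⟩ := ha
  obtain ⟨D, hD⟩ := hb
  refine ⟨2 * 2 ^ (1 / r) * (C + D), fun j => (besovNormAt_sub_le d s r hr a b j).trans ?_⟩
  gcongr
  exacts [hC j, hD j]

lemma MemBesov.of_le_at {d : ℕ} {s r s' r' : ℝ} {c : BSeq d} (hc : MemBesov d s r c)
    (h : ∀ j, besovNormAt d s' r' c j ≤ besovNormAt d s r c j) : MemBesov d s' r' c := by
  obtain ⟨C, hC⟩ := hc
  exact ⟨C, fun j => (h j).trans (hC j)⟩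

lemma MemBesov.mono_s {d : ℕ} {s s' r : ℝ} {c : BSeq d} (hc : MemBesov d s r c) (h : s' ≤ s) :
    MemBesov d s' r c := by
  refine hc.of_le_at fun j => ?_
  unfold besovNormAt
  have : 0 ≤ ∑ k : Fin d → Fin (2 ^ j), |c j k| ^ r :=
    Finset.sum_nonneg fun k _ => Real.rpow_nonneg (abs_nonneg _) _
  gcongr
  norm_num

/-- Embedding `b^{s,∞}_q ⊆ b^{s,∞}_p` for `p ≤ q`, from Hölder's inequality on the `2^{dj}`
coefficients of level `j`. -/
lemma MemBesov.anti_p {d : ℕ} {s p q : ℝ} (hp : 0 < p) (hpq : p ≤ q) {c : BSeq d}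
    (hc : MemBesov d s q c) : MemBesov d s p c := by
  have hq : 0 < q := hp.trans_le hpq
  refine hc.of_le_at fun j => ?_
  unfold besovNormAt
  have hP : 0 ≤ ∑ k : Fin d → Fin (2 ^ j), |c j k| ^ p :=
    Finset.sum_nonneg fun k _ => Real.rpow_nonneg (abs_nonneg _) _
  have hQ : 0 ≤ ∑ k : Fin d → Fin (2 ^ j), |c j k| ^ q :=
    Finset.sum_nonneg fun k _ => Real.rpow_nonneg (abs_nonneg _) _
  have hN : ((Finset.univ : Finset (Fin d → Fin (2 ^ j))).card : ℝ) = 2 ^ ((d : ℝ) * j) := by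
    rw [Finset.card_univ, Fintype.card_fun, Fintype.card_fin, Fintype.card_fin, mul_comm,
      Real.rpow_mul (by norm_num), Real.rpow_natCast, Real.rpow_natCast]
    push_cast
    rfl
  have key := Real.rpow_sum_le_const_mul_sum_rpow (Finset.univ : Finset (Fin d → Fin (2 ^ j)))
    (fun k => |c j k| ^ p) (p := q / p) ((one_le_div hp).2 hpq)
  have e1 : ∀ k, |(|c j k| ^ p)| = |c j k| ^ p := fun k =>
    abs_of_nonneg (Real.rpow_nonneg (abs_nonneg _) _)
  have e2 : ∀ k, (|c j k| ^ p) ^ (q / p) = |c j k| ^ q := fun k => by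
    rw [← Real.rpow_mul (abs_nonneg _), mul_div_cancel₀ _ hp.ne']
  simp only [e1, e2, hN] at key
  have h := Real.rpow_le_rpow (Real.rpow_nonneg hP _) key (z := 1 / q) (by positivity)
  rw [← Real.rpow_mul hP, Real.mul_rpow (by positivity) hQ, ← Real.rpow_mul (by positivity),
    ← Real.rpow_mul (by positivity)] at h
  have e3 : q / p * (1 / q) = 1 / p := by field_simp
  rw [e3] at h
  calc _ ≤ _ := mul_le_mul_of_nonneg_left h (by positivity)
    _ = _ := by
      rw [← mul_assoc, ← Real.rpow_add (by norm_num)]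
      congr 2
      field_simp
      ring

/-- Embedding `b^{s,∞}_p ⊆ b^{s-d/p+d/q,∞}_q` for `p ≤ q`, from the inclusion `ℓ^p ⊆ ℓ^q`. -/
lemma MemBesov.sobolev {d : ℕ} {s p q : ℝ} (hp : 0 < p) (hpq : p ≤ q) {c : BSeq d}
    (hc : MemBesov d s p c) : MemBesov d (s - d / p + d / q) q c := by
  have hq : 0 < q := hp.trans_le hpq
  refine hc.of_le_at fun j => ?_
  unfold besovNormAt
  have hP : 0 ≤ ∑ k : Fin d → Fin (2 ^ j), |c j k| ^ p :=
    Finset.sum_nonneg fun k _ => Real.rpow_nonneg (abs_nonneg _) _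
  have hQ : 0 ≤ ∑ k : Fin d → Fin (2 ^ j), |c j k| ^ q :=
    Finset.sum_nonneg fun k _ => Real.rpow_nonneg (abs_nonneg _) _
  have e0 : s - (d : ℝ) / p + d / q - d / q + d / 2 = s - d / p + d / 2 := by ring
  rw [e0]
  gcongr
  set P := ∑ k : Fin d → Fin (2 ^ j), |c j k| ^ p with hPdef
  have hle : ∀ k, |c j k| ≤ P ^ (1 / p) := fun k => by
    calc |c j k| = (|c j k| ^ p) ^ (1 / p) := by
          rw [← Real.rpow_mul (abs_nonneg _), mul_one_div_cancel hp.ne', Real.rpow_one]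
      _ ≤ _ := by
          refine Real.rpow_le_rpow (Real.rpow_nonneg (abs_nonneg _) _) ?_ (by positivity)
          exact Finset.single_le_sum (f := fun k => |c j k| ^ p)
            (fun k _ => Real.rpow_nonneg (abs_nonneg _) _) (Finset.mem_univ k)
  have hsum : ∑ k : Fin d → Fin (2 ^ j), |c j k| ^ q ≤ (P ^ (1 / p)) ^ q := by
    have hT : 0 ≤ P ^ (1 / p) := Real.rpow_nonneg hP _
    have e4 : (P ^ (1 / p)) ^ q = P * (P ^ (1 / p)) ^ (q - p) := by
      have : (P ^ (1 / p)) ^ p = P := by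
        rw [← Real.rpow_mul hP, one_div_mul_cancel hp.ne', Real.rpow_one]
      nth_rewrite 2 [← this]
      rw [← Real.rpow_add_of_nonneg hT hp.le (by linarith)]
      congr 1
      ring
    rw [e4]
    conv_rhs => rw [hPdef, Finset.sum_mul]
    refine Finset.sum_le_sum fun k _ => ?_
    have e5 : |c j k| ^ q = |c j k| ^ p * |c j k| ^ (q - p) := by
      rw [← Real.rpow_add_of_nonneg (abs_nonneg _) hp.le (by linarith)]
      congr 1
      ring
    rw [e5]
    have := hle k
    exact mul_le_mul_of_nonneg_left (Real.rpow_le_rpow (abs_nonneg _) this (by linarith))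
      (Real.rpow_nonneg (abs_nonneg _) _)
  calc _ ≤ ((P ^ (1 / p)) ^ q) ^ (1 / q) := Real.rpow_le_rpow hQ hsum (by positivity)
    _ = _ := by
      rw [← Real.rpow_mul (Real.rpow_nonneg hP _), mul_one_div_cancel hq.ne', Real.rpow_one]

/-! ### The saturating sequence -/

/-- A sequence of `b^{s,∞}_r` of minimal regularity in every `b^{·,∞}_p`: at even levels all
coefficients equal `2^{-(s+d/2)j}`, which saturates `p ≤ r`; at odd levels the only nonzero
coefficient is the one at `k = 0`, equal to `2^{-(s-d/r+d/2)j}`, which saturates `p ≥ r`. -/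
noncomputable def saturating (d : ℕ) (s r : ℝ) : BSeq d := fun j k =>
  if Even j then (2 : ℝ) ^ (-(s + (d : ℝ) / 2) * (j : ℝ))
  else if k = fun _ => ⟨0, by positivity⟩ then
    (2 : ℝ) ^ (-(s - (d : ℝ) / r + (d : ℝ) / 2) * (j : ℝ))
  else 0

lemma besovNormAt_saturating_even (d : ℕ) (s0 p0 s p : ℝ) (hp : 0 < p) (j : ℕ) (hj : Even j) :
    besovNormAt d s p (saturating d s0 p0) j = 2 ^ ((s - s0) * (j : ℝ)) := by
  have hN : ((Finset.univ : Finset (Fin d → Fin (2 ^ j))).card : ℝ) = 2 ^ ((d : ℝ) * j) := by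
    rw [Finset.card_univ, Fintype.card_fun, Fintype.card_fin, Fintype.card_fin, mul_comm,
      Real.rpow_mul (by norm_num), Real.rpow_natCast, Real.rpow_natCast]
    push_cast
    rfl
  unfold besovNormAt saturating
  simp only [hj, if_true]
  rw [Finset.sum_const, nsmul_eq_mul, hN, abs_of_pos (by positivity),
    ← Real.rpow_mul (by norm_num), ← Real.rpow_add (by norm_num), ← Real.rpow_mul (by norm_num),
    ← Real.rpow_add (by norm_num)]
  congr 1
  field_simp
  ring

lemma besovNormAt_saturating_odd (d : ℕ) (s0 p0 s p : ℝ) (hp : 0 < p) (j : ℕ) (hj : ¬ Even j) :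
    besovNormAt d s p (saturating d s0 p0) j =
      2 ^ ((s - (d : ℝ) / p - (s0 - (d : ℝ) / p0)) * (j : ℝ)) := by
  unfold besovNormAt saturating
  simp only [hj, if_false]
  rw [Finset.sum_eq_single (fun _ => ⟨0, by positivity⟩)]
  · simp only [if_true]
    rw [abs_of_pos (by positivity), ← Real.rpow_mul (by positivity), mul_one_div_cancel hp.ne',
      Real.rpow_one, ← Real.rpow_add (by norm_num)]
    congr 1
    ring
  · intro k _ hk
    simp only [hk, if_false, abs_zero]
    exact Real.zero_rpow hp.ne'
  · intro h
    exact absurd (Finset.mem_univ _) h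

lemma memBesov_saturating (d : ℕ) (s0 p0 : ℝ) (hp0 : 0 < p0) :
    MemBesov d s0 p0 (saturating d s0 p0) := by
  refine ⟨1, fun j => ?_⟩
  by_cases hj : Even j
  · rw [besovNormAt_saturating_even d s0 p0 s0 p0 hp0 j hj]
    simp
  · rw [besovNormAt_saturating_odd d s0 p0 s0 p0 hp0 j hj]
    simp

lemma exists_lt_two_rpow {a : ℝ} (ha : 0 < a) (C : ℝ) :
    ∃ n : ℕ, ∀ j : ℕ, n ≤ j → C < (2 : ℝ) ^ (a * (j : ℝ)) := by
  obtain ⟨n, hn⟩ := pow_unbounded_of_one_lt C (Real.one_lt_rpow (x := 2) (by norm_num) ha)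
  refine ⟨n, fun j hj => hn.trans_le ?_⟩
  rw [← Real.rpow_natCast, ← Real.rpow_mul (by norm_num)]
  gcongr
  norm_num

lemma not_memBesov_saturating_of_lt (d : ℕ) (s0 p0 s p : ℝ) (hp : 0 < p) (hs : s0 < s) :
    ¬ MemBesov d s p (saturating d s0 p0) := by
  rintro ⟨C, hC⟩
  obtain ⟨n, hn⟩ := exists_lt_two_rpow (sub_pos.2 hs) C
  have h := hC (2 * n)
  rw [besovNormAt_saturating_even d s0 p0 s p hp _ (even_two_mul n)] at h
  exact absurd h (not_le.2 (hn (2 * n) (by omega)))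

lemma not_memBesov_saturating_of_lt' (d : ℕ) (s0 p0 s p : ℝ) (hp : 0 < p)
    (hs : (d : ℝ) / p + s0 - (d : ℝ) / p0 < s) :
    ¬ MemBesov d s p (saturating d s0 p0) := by
  rintro ⟨C, hC⟩
  obtain ⟨n, hn⟩ := exists_lt_two_rpow
    (a := s - (d : ℝ) / p - (s0 - (d : ℝ) / p0)) (by linarith) C
  have h := hC (2 * n + 1)
  rw [besovNormAt_saturating_odd d s0 p0 s p hp _ (by simp)] at h
  exact absurd h (not_le.2 (hn (2 * n + 1) (by omega)))

/-! ### The quasi-norm topology -/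

lemma continuous_coord {d : ℕ} {s r : ℝ} (hr : 0 < r) [τ : TopologicalSpace (BesovSp d s r)]
    (hτ : IsBesovTopology d s r τ) (j : ℕ) (k : Fin d → Fin (2 ^ j)) :
    Continuous fun y : BesovSp d s r => y.1 j k := by
  rw [continuous_iff_continuousAt]
  intro x
  refine ((hτ x).tendsto_iff Metric.nhds_basis_ball).2 fun ε hε => ?_
  have hw : (0 : ℝ) < (2 : ℝ) ^ ((s - (d : ℝ) / r + (d : ℝ) / 2) * (j : ℝ)) := by positivity
  refine ⟨ENNReal.ofReal ((2 : ℝ) ^ ((s - (d : ℝ) / r + (d : ℝ) / 2) * (j : ℝ)) * ε),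
    by rw [ENNReal.ofReal_pos]; positivity, fun y hy => ?_⟩
  have h1 : ENNReal.ofReal (besovNormAt d s r (x.1 - y.1) j) < _ :=
    (le_iSup (fun j => ENNReal.ofReal (besovNormAt d s r (x.1 - y.1) j)) j).trans_lt hy
  rw [ENNReal.ofReal_lt_ofReal_iff (by positivity)] at h1
  have h2 := (abs_le_besovNormAt d s r hr (x.1 - y.1) j k).trans_lt h1
  have h3 := lt_of_mul_lt_mul_left h2 hw.le
  rw [Metric.mem_ball, dist_comm, Real.dist_eq]
  exact h3

lemma t2Space_besov {d : ℕ} {s r : ℝ} (hr : 0 < r) [τ : TopologicalSpace (BesovSp d s r)]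
    (hτ : IsBesovTopology d s r τ) : T2Space (BesovSp d s r) := by
  refine T2Space.of_injective_continuous (f := fun y : BesovSp d s r => y.1)
    Subtype.val_injective ?_
  exact continuous_pi fun j => continuous_pi fun k => continuous_coord hr hτ j k

/-- Every translate of the subspace `b^{s',∞}_{r'}` is Borel, being an `F_σ`, in
`b^{s,∞}_r`. -/
lemma measurableSet_memBesov_sub {d : ℕ} {s r s' r' : ℝ} (hr : 0 < r) (hr' : 0 < r')
    [τ : TopologicalSpace (BesovSp d s r)] [MeasurableSpace (BesovSp d s r)]
    [BorelSpace (BesovSp d s r)] (hτ : IsBesovTopology d s r τ) (x : BSeq d) :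
    MeasurableSet {y : BesovSp d s r | MemBesov d s' r' (y.1 - x)} := by
  have : {y : BesovSp d s r | MemBesov d s' r' (y.1 - x)} =
      ⋃ C : ℕ, ⋂ j : ℕ, {y : BesovSp d s r | besovNormAt d s' r' (y.1 - x) j ≤ C} := by
    ext y
    simp only [Set.mem_ofPred_eq, Set.mem_iUnion, Set.mem_iInter]
    constructor
    · rintro ⟨C, hC⟩
      obtain ⟨n, hn⟩ := exists_nat_ge C
      exact ⟨n, fun j => (hC j).trans hn⟩
    · rintro ⟨n, hn⟩
      exact ⟨n, hn⟩
  rw [this]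
  refine MeasurableSet.iUnion fun C => MeasurableSet.iInter fun j => ?_
  refine (isClosed_le ?_ continuous_const).measurableSet
  unfold besovNormAt
  refine continuous_const.mul (Continuous.rpow_const ?_ fun _ => Or.inr (by positivity))
  refine continuous_finsetSum _ fun k _ => ?_
  refine Continuous.rpow_const ?_ fun _ => Or.inr hr'.le
  exact ((continuous_coord hr hτ j k).sub continuous_const).abs

/-- The line `t ↦ t • g` in `b^{s,∞}_r`. -/
def besovLine {d : ℕ} {s r : ℝ} (hr : 0 < r) (g : BSeq d) (hg : MemBesov d s r g) (t : ℝ) :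
    BesovSp d s r := ⟨t • g, hg.smul hr t⟩

lemma continuous_besovLine {d : ℕ} {s r : ℝ} (hr : 0 < r) [τ : TopologicalSpace (BesovSp d s r)]
    (hτ : IsBesovTopology d s r τ) (g : BSeq d) (hg : MemBesov d s r g) :
    Continuous (besovLine hr g hg) := by
  rw [continuous_iff_continuousAt]
  intro t
  refine (hτ _).tendsto_right_iff.2 fun ε hε => ?_
  obtain ⟨C, hC⟩ := hg
  have hC0 : 0 ≤ C := (besovNormAt_nonneg d s r g 0).trans (hC 0)
  have hb : ∀ t', besovEDist d s r (t • g) (t' • g) ≤ ENNReal.ofReal (|t - t'| * C) := by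
    intro t'
    refine iSup_le fun j => ENNReal.ofReal_le_ofReal ?_
    rw [← sub_smul, besovNormAt_smul d s r hr]
    gcongr
    exact hC j
  have hlim : Filter.Tendsto (fun t' => ENNReal.ofReal (|t - t'| * C)) (nhds t) (nhds 0) := by
    have hc : Continuous fun t' : ℝ => ENNReal.ofReal (|t - t'| * C) :=
      ENNReal.continuous_ofReal.comp (by fun_prop)
    simpa using hc.tendsto t
  filter_upwards [hlim.eventually_lt_const hε] with t' hlt
  exact (hb t').trans_lt hlt

/-! ### Haar-null sets from a one-dimensional probe -/

/-- A set covered by countably many Besov subspaces all missing a common element `g` of the ambient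
space is Haar-null: Lebesgue measure on the segment `[0,1] g` is transverse to it. -/
lemma isHaarNullBesov_of_subset_iUnion {d : ℕ} {s r : ℝ} (hr : 0 < r)
    (τ : TopologicalSpace (BesovSp d s r)) (hτ : IsBesovTopology d s r τ)
    {ι : Type} [Countable ι] (s' r' : ι → ℝ) (hr' : ∀ i, 0 < r' i)
    (g : BSeq d) (hg : MemBesov d s r g) (hgn : ∀ i, ¬ MemBesov d (s' i) (r' i) g)
    (S : Set (BesovSp d s r)) (hS : ∀ c ∈ S, ∃ i, MemBesov d (s' i) (r' i) c.1) :
    IsHaarNullBesov d s r τ S := by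
  let _ : MeasurableSpace (BesovSp d s r) := borel _
  have : BorelSpace (BesovSp d s r) := ⟨rfl⟩
  have : T2Space (BesovSp d s r) := t2Space_besov hr hτ
  have hcont := continuous_besovLine hr hτ g hg
  have hmeas : Measurable (besovLine hr g hg) := hcont.measurable
  have hVmeas : ∀ (x : BSeq d) i,
      MeasurableSet {y : BesovSp d s r | MemBesov d (s' i) (r' i) (y.1 - x)} := fun x i =>
    measurableSet_memBesov_sub hr (hr' i) hτ x
  refine ⟨⋃ i, {y : BesovSp d s r | MemBesov d (s' i) (r' i) y.1}, ?_, ?_,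
    Measure.map (besovLine hr g hg) (volume.restrict (Set.Icc (0 : ℝ) 1)), ?_, ?_, ?_⟩
  · intro c hc
    exact Set.mem_iUnion.2 (hS c hc)
  · refine MeasurableSet.iUnion fun i => ?_
    simpa using hVmeas 0 i
  · have : IsProbabilityMeasure ((volume : Measure ℝ).restrict (Set.Icc (0 : ℝ) 1)) :=
      ⟨by simp⟩
    exact Measure.isProbabilityMeasure_map hmeas.aemeasurable
  · have hK : IsCompact (besovLine hr g hg '' Set.Icc (0 : ℝ) 1) := isCompact_Icc.image hcont
    refine ⟨_, hK, ?_⟩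
    rw [Measure.map_apply hmeas hK.isClosed.measurableSet.compl,
      Measure.restrict_apply (hmeas hK.isClosed.measurableSet.compl)]
    convert measure_empty (μ := (volume : Measure ℝ))
    ext t
    simp only [Set.mem_inter_iff, Set.mem_preimage, Set.mem_compl_iff, Set.mem_empty_iff_false,
      iff_false, not_and]
    intro h1 h2
    exact h1 ⟨t, h2, rfl⟩
  · intro x
    have hsub : {y : BesovSp d s r | ∃ a ∈ ⋃ i, {y : BesovSp d s r | MemBesov d (s' i) (r' i) y.1},
        y.1 = x.1 + a.1} ⊆ ⋃ i, {y : BesovSp d s r | MemBesov d (s' i) (r' i) (y.1 - x.1)} := by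
      rintro y ⟨a, ha, hy⟩
      obtain ⟨i, hi⟩ := Set.mem_iUnion.1 ha
      refine Set.mem_iUnion.2 ⟨i, ?_⟩
      rw [Set.mem_ofPred_eq, hy, add_sub_cancel_left]
      exact hi
    refine measure_mono_null hsub (measure_iUnion_null fun i => ?_)
    rw [Measure.map_apply hmeas (hVmeas x.1 i)]
    refine Measure.absolutelyContinuous_of_le Measure.restrict_le_self ?_
    -- Two distinct points of the line in the same translate would put a multiple of `g`, hence
    -- `g` itself, in the subspace.
    refine Set.Subsingleton.measure_zero (fun t ht t' ht' => ?_) _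
    by_contra hne
    have h1 : MemBesov d (s' i) (r' i) ((t • g - x.1) - (t' • g - x.1)) :=
      MemBesov.sub (hr' i) ht ht'
    rw [sub_sub_sub_cancel_right, ← sub_smul] at h1
    have h2 := h1.smul (hr' i) (t - t')⁻¹
    rw [smul_smul, inv_mul_cancel₀ (sub_ne_zero.2 hne), one_smul] at h2
    exact hgn i h2

/-! ### The scaling function -/

lemma sSup_coe_eq_of_isGreatest {P : ℝ → Prop} {b : ℝ} (hb : P b) (hub : ∀ s, P s → s ≤ b) :
    sSup {x : EReal | ∃ s : ℝ, x = (s : EReal) ∧ P s} = (b : EReal) := by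
  refine le_antisymm (sSup_le ?_) (le_sSup ⟨b, rfl, hb⟩)
  rintro _ ⟨s, rfl, hs⟩
  exact EReal.coe_le_coe_iff.2 (hub s hs)

/-- Generic validity of the scaling function (Fraysse): outside a Haar-null subset of
`b^{s₀,∞}_{p₀}` (with `s₀ − d/p₀ > 0`), the scaling function
`s_c(p) = sup{s : c ∈ b^{s,∞}_p}` equals `s₀` for `0 < p ≤ p₀` and `d/p + s₀ − d/p₀`
for `p ≥ p₀`. -/
theorem scalingFunction_generic (d : ℕ) (hd : 1 ≤ d) (p0 s0 : ℝ) (hp0 : 0 < p0)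
    (hs0 : 0 < s0 - (d : ℝ) / p0)
    (τ : TopologicalSpace (BesovSp d s0 p0)) (hτ : IsBesovTopology d s0 p0 τ) :
    IsHaarNullBesov d s0 p0 τ
      {c : BesovSp d s0 p0 |
        ¬ ((∀ p : ℝ, 0 < p → p ≤ p0 →
              sSup {x : EReal | ∃ s : ℝ, x = (s : EReal) ∧ MemBesov d s p c.1}
                = (s0 : EReal)) ∧
           (∀ p : ℝ, p0 ≤ p →
              sSup {x : EReal | ∃ s : ℝ, x = (s : EReal) ∧ MemBesov d s p c.1}
                = (((d : ℝ) / p + s0 - (d : ℝ) / p0 : ℝ) : EReal)))} := by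
  refine isHaarNullBesov_of_subset_iUnion hp0 τ hτ (ι := (ℕ × ℕ) ⊕ (ℕ × ℕ))
    (Sum.elim (fun nm => s0 + 1 / ((nm.2 : ℝ) + 1))
      (fun nm => (d : ℝ) / ((nm.1 : ℝ) + 1) + s0 - (d : ℝ) / p0 + 1 / ((nm.2 : ℝ) + 1)))
    (Sum.elim (fun nm => 1 / ((nm.1 : ℝ) + 1)) (fun nm => (nm.1 : ℝ) + 1))
    ?_ (saturating d s0 p0) (memBesov_saturating d s0 p0 hp0) ?_ _ ?_
  · rintro (nm | nm) <;> simp only [Sum.elim_inl, Sum.elim_inr] <;> positivity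
  · rintro (nm | nm) <;> simp only [Sum.elim_inl, Sum.elim_inr]
    · refine not_memBesov_saturating_of_lt d s0 p0 _ _ (by positivity) ?_
      have : (0 : ℝ) < 1 / ((nm.2 : ℝ) + 1) := by positivity
      linarith
    · refine not_memBesov_saturating_of_lt' d s0 p0 _ _ (by positivity) ?_
      have : (0 : ℝ) < 1 / ((nm.2 : ℝ) + 1) := by positivity
      linarith
  · intro c hc
    by_contra hno
    have hno' : ∀ i, ¬ _ := not_exists.1 hno
    refine hc ⟨fun p hp hpp => ?_, fun p hpp => ?_⟩
    · refine sSup_coe_eq_of_isGreatest (MemBesov.anti_p hp hpp c.2) fun s hs => ?_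
      by_contra! hlt
      obtain ⟨n, hn⟩ := exists_nat_one_div_lt hp
      obtain ⟨m, hm⟩ := exists_nat_one_div_lt (sub_pos.2 hlt)
      refine hno' (Sum.inl (n, m)) ?_
      simp only [Sum.elim_inl]
      exact (hs.anti_p (by positivity) hn.le).mono_s (by linarith)
    · have hp : 0 < p := hp0.trans_le hpp
      refine sSup_coe_eq_of_isGreatest (P := fun s => MemBesov d s p c.1) ?_ fun s hs => ?_
      · exact (MemBesov.sobolev hp0 hpp c.2).mono_s (by linarith)
      by_contra! hlt
      obtain ⟨n, hn⟩ := exists_nat_ge p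
      obtain ⟨m, hm⟩ := exists_nat_one_div_lt (sub_pos.2 hlt)
      refine hno' (Sum.inr (n, m)) ?_
      simp only [Sum.elim_inr]
      exact (hs.sobolev hp (q := (n : ℝ) + 1) (by linarith)).mono_s (by linarith)
end

section
/- Let d ≥ 1, 1 ≤ r < ∞ and s > d/r. The sequence g defined by g_{j,k} = j^{−a} 2^{−(s−d/r+d/2)j} 2^{−(d/r)J} (with a = 1 + 3/r and J the irreducibility index of (j,k)) belongs to the Besov sequence space b^{s,∞}_r, i.e. sup_{j≥1} 2^{(s−d/r+d/2)j} (Σ_k |g_{j,k}|^r)^{1/r} < ∞. -/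
/-!
The `r`-th powers of the factors `2^{-(d/r)J}` sum over `k` to `∑_k 2^{-dJ(j,k)}`. The points `k`
of index `J ≤ j` have all coordinates divisible by `2^{j-J}`, so there are at most `2^{dJ}` of
them (`card_irredIndex_eq_le`), and each of the `j + 1` possible values of `J` contributes at
most `1` to the sum, which is therefore at most `j + 1 ≤ 2j`
(`sum_irredIndex_le`). The factor `2^{±(s-d/r+d/2)j}` cancels in the quasi-norm, so the `j`-th
term is at most `j^{-(1+3/r)} (2j)^{1/r} ≤ j^{-1} · 2j = 2`.
-/

open MeasureTheory
open scoped ENNReal BigOperators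

lemma irredIndex_le (d j : ℕ) (k : Fin d → Fin (2 ^ j)) : irredIndex d j k ≤ j :=
  Nat.find_min' _ (fun i => by simp)

lemma dvd_of_irredIndex (d j : ℕ) (k : Fin d → Fin (2 ^ j)) (i : Fin d) :
    2 ^ (j - irredIndex d j k) ∣ (k i : ℕ) :=
  Nat.find_spec (p := fun J : ℕ => ∀ i : Fin d, 2 ^ (j - J) ∣ (k i : ℕ)) ⟨j, fun i => by simp⟩ i

lemma card_dvd_le (j J : ℕ) (hJ : J ≤ j) :
    (Finset.univ.filter (fun x : Fin (2 ^ j) => 2 ^ (j - J) ∣ (x : ℕ))).card ≤ 2 ^ J := by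
  conv_rhs => rw [← Finset.card_range (2 ^ J)]
  apply Finset.card_le_card_of_injOn (fun x : Fin (2 ^ j) => (x : ℕ) / 2 ^ (j - J))
  · intro x _
    simp only [Finset.coe_range, Set.mem_Iio]
    apply Nat.div_lt_of_lt_mul
    rw [← pow_add, Nat.sub_add_cancel hJ]
    exact x.2
  · intro x hx y hy hxy
    simp only [Finset.coe_filter, Finset.mem_univ, true_and, Set.mem_ofPred_eq] at hx hy
    apply Fin.ext
    rw [← Nat.div_mul_cancel hx, ← Nat.div_mul_cancel hy]
    exact congrArg (· * 2 ^ (j - J)) hxy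

lemma card_irredIndex_eq_le (d j J : ℕ) (hJ : J ≤ j) :
    (Finset.univ.filter (fun k : Fin d → Fin (2 ^ j) => irredIndex d j k = J)).card
      ≤ (2 ^ J) ^ d := by
  calc _ ≤ (Fintype.piFinset (fun _ : Fin d =>
        Finset.univ.filter (fun x : Fin (2 ^ j) => 2 ^ (j - J) ∣ (x : ℕ)))).card := by
        apply Finset.card_le_card
        intro k hk
        simp only [Finset.mem_filter, Finset.mem_univ, true_and] at hk
        subst hk
        simpa using dvd_of_irredIndex d j k
    _ ≤ _ := by
        rw [Fintype.card_piFinset_const]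
        exact Nat.pow_le_pow_left (card_dvd_le j J hJ) d

lemma sum_irredIndex_le (d j : ℕ) :
    ∑ k : Fin d → Fin (2 ^ j), (((2 : ℝ) ^ irredIndex d j k) ^ d)⁻¹ ≤ j + 1 := by
  rw [← Finset.sum_fiberwise_of_maps_to (t := Finset.range (j + 1)) (g := irredIndex d j)
    (fun k _ => Finset.mem_range.2 (Nat.lt_succ_of_le (irredIndex_le d j k)))]
  calc _ ≤ ∑ J ∈ Finset.range (j + 1), (1 : ℝ) := by
        apply Finset.sum_le_sum
        intro J hJ
        have hJ' : J ≤ j := Nat.lt_succ_iff.1 (Finset.mem_range.1 hJ)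
        rw [Finset.sum_congr rfl (g := fun _ => (((2 : ℝ) ^ J) ^ d)⁻¹)
          (fun k hk => by rw [(Finset.mem_filter.1 hk).2]), Finset.sum_const, nsmul_eq_mul,
          ← div_eq_mul_inv, div_le_one (by positivity)]
        exact_mod_cast card_irredIndex_eq_le d j J hJ'
    _ = _ := by simp

/-- The saturating sequence `g` belongs to `b^{s,∞}_r`. -/
theorem gSeq_memBesov (d : ℕ) (hd : 1 ≤ d) (r s : ℝ) (hr : 1 ≤ r) (hs : (d : ℝ) / r < s) :
    MemBesov d s r (gSeq d s r) := by
  have hr0 : 0 < r := by linarith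
  refine ⟨2, fun j => ?_⟩
  unfold besovNormAt
  rcases Nat.eq_zero_or_pos j with rfl | hj
  · simp [gSeq, Real.zero_rpow hr0.ne', hr0.ne']
  have hj1 : (1 : ℝ) ≤ j := by exact_mod_cast hj
  set e : ℝ := s - (d : ℝ) / r + (d : ℝ) / 2
  set A : ℝ := (j : ℝ) ^ (-(1 + 3 / r)) with hA
  set B : ℝ := (2 : ℝ) ^ (-e * (j : ℝ)) with hB
  have hA0 : 0 ≤ A := by positivity
  have hB0 : 0 ≤ B := by positivity
  have hterm : ∀ k : Fin d → Fin (2 ^ j), |gSeq d s r j k| ^ r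
      = (A * B) ^ r * (((2 : ℝ) ^ irredIndex d j k) ^ d)⁻¹ := by
    intro k
    have hg : gSeq d s r j k = A * B * (2 : ℝ) ^ (-((d : ℝ) / r) * (irredIndex d j k : ℝ)) := by
      simp only [gSeq, if_neg hj.ne']
      rfl
    rw [hg, abs_of_nonneg (by positivity), Real.mul_rpow (by positivity) (by positivity),
      ← Real.rpow_mul (by norm_num), ← pow_mul, ← Real.rpow_natCast, ← Real.rpow_neg (by norm_num)]
    congr 2
    push_cast
    field_simp
  simp only [hterm]
  rw [← Finset.mul_sum]
  set S : ℝ := ∑ k : Fin d → Fin (2 ^ j), (((2 : ℝ) ^ irredIndex d j k) ^ d)⁻¹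
  have hS0 : 0 ≤ S := Finset.sum_nonneg fun k _ => by positivity
  have hS : S ≤ 2 * j := (sum_irredIndex_le d j).trans (by linarith)
  rw [Real.mul_rpow (by positivity) hS0, ← Real.rpow_mul (by positivity),
    mul_one_div_cancel hr0.ne', Real.rpow_one]
  have hcancel : (2 : ℝ) ^ (e * (j : ℝ)) * B = 1 := by
    rw [hB, ← Real.rpow_add (by norm_num)]
    simp
  have hSr : S ^ (1 / r) ≤ 2 * j := by
    calc S ^ (1 / r) ≤ (2 * (j : ℝ)) ^ (1 / r) :=
          Real.rpow_le_rpow hS0 hS (by positivity)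
      _ ≤ (2 * (j : ℝ)) ^ (1 : ℝ) :=
          Real.rpow_le_rpow_of_exponent_le (by linarith) ((div_le_one hr0).2 hr)
      _ = 2 * j := Real.rpow_one _
  have hAj : A ≤ (j : ℝ)⁻¹ := by
    rw [← Real.rpow_neg_one, hA]
    apply Real.rpow_le_rpow_of_exponent_le hj1
    have : 0 ≤ 3 / r := by positivity
    linarith
  calc (2 : ℝ) ^ (e * (j : ℝ)) * (A * B * S ^ (1 / r))
      = ((2 : ℝ) ^ (e * (j : ℝ)) * B) * (A * S ^ (1 / r)) := by ring
    _ = A * S ^ (1 / r) := by rw [hcancel, one_mul]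
    _ ≤ (j : ℝ)⁻¹ * (2 * j) := by gcongr
    _ = 2 := by field_simp
end

section
/- Let d ≥ 1, 1 ≤ p < ∞, 1 ≤ r < ∞ and s > d/r. Set α̃ = 2s/(2s+d) if r > pd/(2s+d), and α̃ = 2(s − d/r + d/p)/(2(s − d/r) + d) otherwise, and let g be the sequence with g_{j,k} = j^{−a} 2^{−(s−d/r+d/2)j} 2^{−(d/r)J} (a = 1 + 3/r, J the irreducibility index of (j,k)). Then for every f ∈ b^{s,∞}_r and every ε with 0 < ε < 1 − α̃, the set { α ∈ ℝ : f + α·g ∈ W((1−α̃−ε)p, p) } has Lebesgue measure zero (it contains at most one point). -/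
/-!
The set in question has at most one element. If `f + α • g` and `f + β • g` both lie in `W(w,p)`
with `α ≠ β`, then, since `W(w,p)` is stable under differences and scalar multiples, so does `g`
(`wBesovNorm_le_of_diff`). But the quasi-norm of `g` is infinite. Testing it at
`λ_j = (1/2) j^{-a} 2^{-σj}` and keeping only level `j` of the sum gives, when at least `2^{nj}`
coefficients exceed `λ_j`, the lower bound `2^{-w} j^{-aw} 2^{δj}` with `δ = dp/2 - d + n - σw`,
which is unbounded as soon as `δ > 0` (`wBesovNorm_eq_top`).

* If `r > pd/(2s+d)`, all `2^{dj}` coefficients of level `j` are used: `J ≤ j` gives `σ = s + d/2`,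
  `n = d`, and `δ = (s + d/2) ε p`.
* Otherwise only `k = 0` is used, where `J = 0`: this gives `σ = s - d/r + d/2`, `n = 0`, and
  `δ = (s - d/r + d/2) ε p`.
-/

open MeasureTheory
open scoped ENNReal BigOperators

/-- The sum `Σ_j 2^{j(dp/2−d)} #{k : |c_{j,k}| > λ}` entering the weak Besov quasi-norm. -/
noncomputable def levelSum (d : ℕ) (p : ℝ) (c : BSeq d) (lam : ℝ) : ℝ≥0∞ :=
  ∑' j : ℕ, ENNReal.ofReal ((2 : ℝ) ^ (((d : ℝ) * p / 2 - (d : ℝ)) * (j : ℝ))) *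
    (Nat.card {k : Fin d → Fin (2 ^ j) // lam < |c j k|} : ℝ≥0∞)

lemma le_wBesovNorm (d : ℕ) (w p : ℝ) (c : BSeq d) {lam : ℝ} (hlam : 0 < lam) :
    ENNReal.ofReal (lam ^ w) * levelSum d p c lam ≤ wBesovNorm d w p c :=
  le_iSup (fun l : Set.Ioi (0 : ℝ) => ENNReal.ofReal ((l : ℝ) ^ w) * levelSum d p c l)
    ⟨lam, hlam⟩

lemma levelSum_le_add (d : ℕ) (p : ℝ) (u v g : BSeq d) (lam mu : ℝ)
    (h : ∀ j k, lam < |g j k| → mu < |u j k| ∨ mu < |v j k|) :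
    levelSum d p g lam ≤ levelSum d p u mu + levelSum d p v mu := by
  unfold levelSum
  rw [← ENNReal.tsum_add]
  refine ENNReal.tsum_le_tsum fun j => ?_
  rw [← mul_add]
  gcongr
  rw [← Nat.cast_add, Nat.cast_le]
  have h1 : {k | lam < |g j k|} ⊆ {k | mu < |u j k|} ∪ {k | mu < |v j k|} := fun k hk => h j k hk
  exact (Nat.card_mono (Set.toFinite _) h1).trans (Set.card_union_le _ _)

/-- If a nonzero multiple of `g` is a difference `u - v`, its weak Besov quasi-norm is controlled
by those of `u` and `v`: where `|g| > λ`, one of `|u|`, `|v|` exceeds `|t|λ/2`. -/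
lemma wBesovNorm_le_of_diff (d : ℕ) (w p : ℝ) (u v g : BSeq d) (t : ℝ) (ht : t ≠ 0)
    (h : ∀ j k, u j k - v j k = t * g j k) :
    wBesovNorm d w p g ≤
      ENNReal.ofReal ((|t| / 2) ^ (-w)) * (wBesovNorm d w p u + wBesovNorm d w p v) := by
  have hm : 0 < |t| / 2 := by positivity
  refine iSup_le fun ⟨lam, hlam⟩ => ?_
  have hlam' : 0 < lam := hlam
  have hml : 0 < |t| / 2 * lam := by positivity
  have key : levelSum d p g lam ≤
      levelSum d p u (|t| / 2 * lam) + levelSum d p v (|t| / 2 * lam) := by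
    refine levelSum_le_add d p u v g _ _ fun j k hk => ?_
    by_contra! hcon
    have h1 : |t| * |g j k| ≤ |u j k| + |v j k| := by
      rw [← abs_mul, ← h]
      exact abs_sub _ _
    have h2 : |t| * lam < |t| * |g j k| := mul_lt_mul_of_pos_left hk (abs_pos.mpr ht)
    linarith [hcon.1, hcon.2]
  have hpow : lam ^ w = (|t| / 2) ^ (-w) * (|t| / 2 * lam) ^ w := by
    rw [Real.mul_rpow hm.le hlam'.le, ← mul_assoc, ← Real.rpow_add hm]
    simp
  calc ENNReal.ofReal (lam ^ w) * levelSum d p g lam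
      ≤ ENNReal.ofReal (lam ^ w) *
          (levelSum d p u (|t| / 2 * lam) + levelSum d p v (|t| / 2 * lam)) := by gcongr
    _ = ENNReal.ofReal ((|t| / 2) ^ (-w)) *
          (ENNReal.ofReal ((|t| / 2 * lam) ^ w) * levelSum d p u (|t| / 2 * lam) +
            ENNReal.ofReal ((|t| / 2 * lam) ^ w) * levelSum d p v (|t| / 2 * lam)) := by
        rw [hpow, ENNReal.ofReal_mul (by positivity), mul_assoc, mul_add]
    _ ≤ _ := by
        gcongr
        · exact le_wBesovNorm d w p u hml
        · exact le_wBesovNorm d w p v hml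

/-- Divergence criterion: at least `2^{nj}` coefficients above `(1/2) j^{-a} 2^{-σj}` at every
level `j ≥ 1`, with `dp/2 - d + n - σw > 0`, force the weak Besov quasi-norm to be infinite. -/
lemma wBesovNorm_eq_top (d : ℕ) (w p a σ n : ℝ) (c : BSeq d)
    (hδ : 0 < (d : ℝ) * p / 2 - d + n - σ * w)
    (hc : ∀ j : ℕ, 1 ≤ j → (2 : ℝ) ^ (n * j) ≤
      (Nat.card {k : Fin d → Fin (2 ^ j) //
        2⁻¹ * ((j : ℝ) ^ (-a) * (2 : ℝ) ^ (-σ * j)) < |c j k|} : ℝ)) :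
    wBesovNorm d w p c = ⊤ := by
  set δ := (d : ℝ) * p / 2 - d + n - σ * w with hδdef
  have hlow : ∀ j : ℕ, 1 ≤ j →
      ENNReal.ofReal ((2⁻¹ : ℝ) ^ w * (Real.exp (δ * Real.log 2 * j) / (j : ℝ) ^ (a * w)))
        ≤ wBesovNorm d w p c := by
    intro j hj
    have hj0 : (0 : ℝ) < j := by exact_mod_cast hj
    set lam : ℝ := 2⁻¹ * ((j : ℝ) ^ (-a) * (2 : ℝ) ^ (-σ * j)) with hlam
    have hlampos : 0 < lam := by positivity
    refine le_trans ?_ (le_wBesovNorm d w p c hlampos)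
    have hterm : ENNReal.ofReal ((2 : ℝ) ^ (((d : ℝ) * p / 2 - (d : ℝ)) * (j : ℝ)) *
        (2 : ℝ) ^ (n * j)) ≤ levelSum d p c lam := by
      refine le_trans ?_ (ENNReal.le_tsum j)
      rw [ENNReal.ofReal_mul (by positivity)]
      gcongr
      rw [← ENNReal.ofReal_natCast]
      exact ENNReal.ofReal_le_ofReal (hc j hj)
    refine le_trans (le_of_eq ?_) (mul_le_mul_right hterm _)
    rw [← ENNReal.ofReal_mul (by positivity)]
    congr 1
    have e1 : Real.exp (δ * Real.log 2 * j) = (2 : ℝ) ^ (δ * j) := by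
      rw [Real.rpow_def_of_pos (by norm_num)]
      congr 1
      ring
    rw [e1, hlam, Real.mul_rpow (by norm_num) (by positivity),
      Real.mul_rpow (by positivity) (by positivity), ← Real.rpow_mul hj0.le,
      ← Real.rpow_mul (by norm_num), div_eq_mul_inv, ← Real.rpow_neg hj0.le]
    have e2 : δ * (j : ℝ) =
        -σ * j * w + (((d : ℝ) * p / 2 - (d : ℝ)) * (j : ℝ) + n * j) := by
      rw [hδdef]
      ring
    rw [e2, Real.rpow_add (by norm_num), Real.rpow_add (by norm_num), neg_mul a w]
    ring
  have htend : Filter.Tendsto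
      (fun j : ℕ => (2⁻¹ : ℝ) ^ w * (Real.exp (δ * Real.log 2 * j) / (j : ℝ) ^ (a * w)))
      Filter.atTop Filter.atTop :=
    ((tendsto_exp_mul_div_rpow_atTop (a * w) (δ * Real.log 2)
      (mul_pos hδ (Real.log_pos (by norm_num)))).comp
        tendsto_natCast_atTop_atTop).const_mul_atTop (by positivity)
  have h2 := ENNReal.tendsto_ofReal_atTop.comp htend
  refine top_le_iff.mp (le_of_tendsto h2 ?_)
  filter_upwards [Filter.eventually_ge_atTop 1] with j hj using hlow j hj

lemma irredIndex_zero (d j : ℕ) : irredIndex d j (fun _ => 0) = 0 :=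
  Nat.le_zero.mp (Nat.find_min' _ fun i => by simp)

lemma wBesovNorm_gSeq_eq_top (d : ℕ) (hd : 1 ≤ d) (p r s : ℝ)
    (hp : 1 ≤ p) (hr : 1 ≤ r) (hs : (d : ℝ) / r < s) (ε : ℝ) (hε1 : 0 < ε) :
    wBesovNorm d ((1 - alphaTilde d s r p - ε) * p) p (gSeq d s r) = ⊤ := by
  have hd0 : (0 : ℝ) < d := by exact_mod_cast hd
  have hp0 : 0 < p := by linarith
  have hr0 : 0 < r := by linarith
  have hdr : 0 < (d : ℝ) / r := by positivity
  have hs0 : 0 < s := by linarith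
  by_cases hcase : p * (d : ℝ) / (2 * s + (d : ℝ)) < r
  · have hα : alphaTilde d s r p = 2 * s / (2 * s + (d : ℝ)) := if_pos hcase
    refine wBesovNorm_eq_top d _ p (1 + 3 / r) (s + d / 2) d _ ?_ fun j hj => ?_
    · have e : (d : ℝ) * p / 2 - d + d - (s + d / 2) * ((1 - alphaTilde d s r p - ε) * p)
          = (s + d / 2) * ε * p := by
        rw [hα]
        field_simp
        ring
      rw [e]
      positivity
    · have hj0 : (0 : ℝ) < j := by exact_mod_cast hj
      have hall : ∀ k : Fin d → Fin (2 ^ j),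
          2⁻¹ * ((j : ℝ) ^ (-(1 + 3 / r)) * (2 : ℝ) ^ (-(s + d / 2) * j)) < |gSeq d s r j k| := by
        intro k
        have hJ : (irredIndex d j k : ℝ) ≤ j := by exact_mod_cast irredIndex_le d j k
        have hA : 0 < (j : ℝ) ^ (-(1 + 3 / r)) * (2 : ℝ) ^ (-(s + d / 2) * j) := by positivity
        refine lt_of_lt_of_le (mul_lt_of_lt_one_left hA (by norm_num)) (le_trans ?_ (le_abs_self _))
        rw [gSeq, if_neg (by omega), mul_assoc, ← Real.rpow_add (by norm_num)]
        gcongr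
        · norm_num
        · nlinarith [mul_le_mul_of_nonneg_left hJ hdr.le]
      have hcard : Nat.card {k : Fin d → Fin (2 ^ j) //
          2⁻¹ * ((j : ℝ) ^ (-(1 + 3 / r)) * (2 : ℝ) ^ (-(s + d / 2) * j)) < |gSeq d s r j k|}
          = (2 ^ j) ^ d := by
        rw [Nat.card_congr (Equiv.subtypeUnivEquiv hall)]
        simp
      rw [hcard]
      push_cast
      rw [← pow_mul, ← Real.rpow_natCast]
      push_cast
      rw [mul_comm]
  · have hα : alphaTilde d s r p =
        2 * (s - (d : ℝ) / r + (d : ℝ) / p) / (2 * (s - (d : ℝ) / r) + (d : ℝ)) := if_neg hcase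
    have hσ : 0 < s - (d : ℝ) / r + d / 2 := by linarith
    refine wBesovNorm_eq_top d _ p (1 + 3 / r) (s - d / r + d / 2) 0 _ ?_ fun j hj => ?_
    · have e : (d : ℝ) * p / 2 - d + 0 -
            (s - d / r + d / 2) * ((1 - alphaTilde d s r p - ε) * p)
          = (s - d / r + d / 2) * ε * p := by
        rw [hα]
        generalize (d : ℝ) / r = y at *
        have : 2 * (s - y) + (d : ℝ) ≠ 0 := by linarith
        field_simp
        ring
      rw [e]
      positivity
    · have hj0 : (0 : ℝ) < j := by exact_mod_cast hj
      have hA : 0 < (j : ℝ) ^ (-(1 + 3 / r)) * (2 : ℝ) ^ (-(s - d / r + d / 2) * j) := by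
        positivity
      have hk : 2⁻¹ * ((j : ℝ) ^ (-(1 + 3 / r)) * (2 : ℝ) ^ (-(s - d / r + d / 2) * j))
          < |gSeq d s r j (fun _ => 0)| := by
        refine lt_of_lt_of_le (mul_lt_of_lt_one_left hA (by norm_num)) (le_trans (le_of_eq ?_) (le_abs_self _))
        rw [gSeq, if_neg (by omega), irredIndex_zero]
        simp
      rw [zero_mul, Real.rpow_zero, Nat.one_le_cast, Nat.one_le_iff_ne_zero, ← Nat.pos_iff_ne_zero]
      exact Nat.card_pos_iff.mpr ⟨⟨⟨_, hk⟩⟩, inferInstance⟩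

/-- For every `f ∈ b^{s,∞}_r` and every `0 < ε < 1 − α̃`, the set of `α ∈ ℝ` such that
`f + α·g ∈ W((1−α̃−ε)p, p)` has Lebesgue measure zero. -/
theorem measure_translate_wBesov_eq_zero (d : ℕ) (hd : 1 ≤ d) (p r s : ℝ)
    (hp : 1 ≤ p) (hr : 1 ≤ r) (hs : (d : ℝ) / r < s)
    (f : BSeq d) (hf : MemBesov d s r f)
    (ε : ℝ) (hε1 : 0 < ε) (hε2 : ε < 1 - alphaTilde d s r p) :
    volume {α : ℝ | MemWBesov d ((1 - alphaTilde d s r p - ε) * p) p (f + α • gSeq d s r)}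
      = 0 := by
  refine Set.Subsingleton.measure_zero (fun α hα β hβ => ?_) _
  by_contra hne
  refine (lt_of_le_of_lt
    (wBesovNorm_le_of_diff d _ p _ _ (gSeq d s r) (α - β) (sub_ne_zero.mpr hne) fun j k => ?_)
    (ENNReal.mul_lt_top ENNReal.ofReal_lt_top
      (ENNReal.add_lt_top.mpr ⟨lt_top_iff_ne_top.mpr hα, lt_top_iff_ne_top.mpr hβ⟩))).ne
    (wBesovNorm_gSeq_eq_top d hd p r s hp hr hs ε hε1)
  simp only [Pi.add_apply, Pi.smul_apply, smul_eq_mul]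
  ring
end
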